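/- arXiv:1205.0309 — 4 statements merged into one kernel-verified Lean document; each statement's English description precedes it below -/
import Mathlib

section
/- Let n, R, K be positive integers, let s > 0, let m be a positive integer, and let D ∈ ℝ^{n×R} be a matrix with exactly K distinct row values such that any two distinct row values of D are at Euclidean distance at least s and each distinct row value of D occurs as a row of D for more than m indices. Let C ∈ ℝ^{n×R} be any matrix with fewer than K distinct row values. Then ‖C − D‖_F > √m · (s/3). -/
open Matrix

/-- The Euclidean distance between two vectors in `ℝ^R` (e.g. two rows of a matrix). -/
noncomputable def rowDist {R : ℕ} (a b : Fin R → ℝ) : ℝ :=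
  Real.sqrt (∑ k, (a k - b k) ^ 2)

/-- The Frobenius norm of a real matrix. -/
noncomputable def frobNorm {m n : ℕ} (A : Matrix (Fin m) (Fin n) ℝ) : ℝ :=
  Real.sqrt (∑ i, ∑ j, (A i j) ^ 2)

theorem rowDist_eq_dist {R : ℕ} (a b : Fin R → ℝ) :
    rowDist a b = dist (WithLp.toLp 2 a) (WithLp.toLp 2 b) := by
  rw [EuclideanSpace.dist_eq]
  simp [rowDist, Real.dist_eq, sq_abs]

/-- if `D` has exactly `K` distinct row values, pairwise `s`-separated, each
occurring more than `m` times, then any matrix `C` with fewer than `K` distinct row values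
satisfies `‖C - D‖_F > √m (s/3)`. -/
theorem stmt12 {n R K m : ℕ} (hn : 0 < n) (hR : 0 < R) (hK : 0 < K) (hm : 0 < m)
    (s : ℝ) (hs : 0 < s)
    (D : Matrix (Fin n) (Fin R) ℝ)
    (hKrows : (Set.range fun i => D i).ncard = K)
    (hsep : ∀ i j, D i ≠ D j → s ≤ rowDist (D i) (D j))
    (hocc : ∀ i, m < {j | D j = D i}.ncard)
    (C : Matrix (Fin n) (Fin R) ℝ)
    (hC : (Set.range fun i => C i).ncard < K) :
    Real.sqrt m * (s / 3) < frobNorm (C - D) := by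
  have key : ∃ i, ∀ j, D j = D i → s / 3 < rowDist (C j) (D j) := by
    by_contra! hcon
    have h1 : ∀ v : Fin R → ℝ, ∃ j, v ∈ Set.range (fun i => D i) →
        D j = v ∧ rowDist (C j) v ≤ s / 3 := by
      intro v
      by_cases hv : v ∈ Set.range (fun i => D i)
      · obtain ⟨i, rfl⟩ := hv
        obtain ⟨j, hj, hj2⟩ := hcon i
        exact ⟨j, fun _ => ⟨hj, by simpa only [hj] using hj2⟩⟩
      · exact ⟨⟨0, hn⟩, fun h => absurd h hv⟩
    choose f hf using h1
    have hlt : (Set.range fun i => C i).ncard < (Set.range fun i => D i).ncard := by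
      rw [hKrows]; exact hC
    obtain ⟨v, hv, w, hw, hne, heq⟩ := Set.exists_ne_map_eq_of_ncard_lt_of_maps_to hlt
      (f := fun v => C (f v)) (fun v _ => ⟨f v, rfl⟩)
    obtain ⟨hv1, hv2⟩ := hf v hv
    obtain ⟨hw1, hw2⟩ := hf w hw
    have h3 := hsep (f v) (f w) (by rw [hv1, hw1]; exact hne)
    rw [hv1, hw1, rowDist_eq_dist] at h3
    rw [heq, rowDist_eq_dist] at hv2
    rw [rowDist_eq_dist] at hw2
    have := dist_triangle_left (WithLp.toLp 2 v) (WithLp.toLp 2 w) (WithLp.toLp 2 (C (f w)))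
    linarith
  obtain ⟨i, hi⟩ := key
  classical
  have hcard := hocc i
  have hset : {j | D j = D i} = ((Finset.univ.filter fun j => D j = D i : Finset (Fin n)) : Set (Fin n)) := by
    ext; simp
  rw [hset, Set.ncard_coe_finset] at hcard
  set S : Finset (Fin n) := Finset.univ.filter fun j => D j = D i with hS
  have hcard' : (m : ℝ) < S.card := by exact_mod_cast hcard
  have hrow : ∀ j ∈ S, (s / 3) ^ 2 ≤ ∑ k, ((C - D) j k) ^ 2 := by
    intro j hj
    have h := hi j (by simpa [hS] using hj)
    unfold rowDist at h
    exact ((Real.lt_sqrt (by positivity)).1 h).le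
  have hsum : (S.card : ℝ) * (s / 3) ^ 2 ≤ ∑ j, ∑ k, ((C - D) j k) ^ 2 := by
    calc (S.card : ℝ) * (s / 3) ^ 2 = ∑ j ∈ S, (s / 3) ^ 2 := by simp
      _ ≤ ∑ j ∈ S, ∑ k, ((C - D) j k) ^ 2 := Finset.sum_le_sum hrow
      _ ≤ _ := Finset.sum_le_sum_of_subset_of_nonneg (Finset.subset_univ _)
          (fun _ _ _ => Finset.sum_nonneg fun _ _ => sq_nonneg _)
  unfold frobNorm
  apply Real.lt_sqrt_of_sq_lt
  rw [mul_pow, Real.sq_sqrt (Nat.cast_nonneg m)]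
  exact lt_of_lt_of_le (mul_lt_mul_of_pos_right hcard' (by positivity)) hsum
end

section
/- Let n, R, K be positive integers, let s, t > 0 and let m be a positive integer with √m·(s/3) > 2t. Let X, D ∈ ℝ^{n×R} be such that D has exactly K distinct row values, any two distinct row values of D are at Euclidean distance at least s, each distinct row value of D occurs as a row of D for more than m indices, and ‖D − X‖_F ≤ t. Then: (i) there exists a matrix C ∈ ℝ^{n×R} with at most K distinct row values such that ‖C − X‖_F ≤ t; and (ii) every matrix C ∈ ℝ^{n×R} with fewer than K distinct row values satisfies ‖C − X‖_F > t. -/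
open Matrix

/-- the deterministic, conditional form of Theorem 5.1: the least-squares
clustering error drops below the threshold `t` exactly when the number of allowed clusters
reaches the true number `K`. -/
theorem stmt13 {n R K m : ℕ} (hn : 0 < n) (hR : 0 < R) (hK : 0 < K) (hm : 0 < m)
    (s t : ℝ) (hs : 0 < s) (ht : 0 < t)
    (hmst : 2 * t < Real.sqrt m * (s / 3))
    (X D : Matrix (Fin n) (Fin R) ℝ)
    (hKrows : (Set.range fun i => D i).ncard = K)
    (hsep : ∀ i j, D i ≠ D j → s ≤ rowDist (D i) (D j))
    (hocc : ∀ i, m < {j | D j = D i}.ncard)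
    (hDX : frobNorm (D - X) ≤ t) :
    (∃ C : Matrix (Fin n) (Fin R) ℝ,
        (Set.range fun i => C i).ncard ≤ K ∧ frobNorm (C - X) ≤ t) ∧
      ∀ C : Matrix (Fin n) (Fin R) ℝ,
        (Set.range fun i => C i).ncard < K → t < frobNorm (C - X) := by
  refine ⟨⟨D, hKrows.le, hDX⟩, ?_⟩
  intro C hC
  by_contra hcon
  have hCX := not_lt.mp hcon
  unfold frobNorm at hDX hCX
  rw [Real.sqrt_le_left ht.le] at hDX hCX
  simp only [Matrix.sub_apply] at hDX hCX
  have hCD : ∑ i, ∑ j, (C i j - D i j) ^ 2 ≤ 4 * t ^ 2 := by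
    have h : ∑ i, ∑ j, (C i j - D i j) ^ 2 ≤
        ∑ i, ∑ j, (2 * (C i j - X i j) ^ 2 + 2 * (D i j - X i j) ^ 2) := by
      refine Finset.sum_le_sum fun i _ => Finset.sum_le_sum fun j _ => ?_
      nlinarith [sq_nonneg ((C i j - X i j) + (D i j - X i j))]
    simp only [Finset.sum_add_distrib, ← Finset.mul_sum] at h
    linarith
  have hms : 4 * t ^ 2 < m * (s / 3) ^ 2 := by
    have h := pow_lt_pow_left₀ hmst (by positivity) (two_ne_zero)
    rw [mul_pow, mul_pow, Real.sq_sqrt (Nat.cast_nonneg m)] at h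
    linarith
  have key : ∀ i, ∃ j, D j = D i ∧ ∑ k, (C j k - D j k) ^ 2 < (s / 3) ^ 2 := by
    intro i
    by_contra hne
    push Not at hne
    classical
    have hcard := hocc i
    rw [Set.ncard_eq_toFinset_card'] at hcard
    have h1 : ({j | D j = D i} : Set (Fin n)).toFinset.card • (s / 3) ^ 2 ≤
        ∑ j ∈ ({j | D j = D i} : Set (Fin n)).toFinset, ∑ k, (C j k - D j k) ^ 2 :=
      Finset.card_nsmul_le_sum _ _ _ fun j hj => hne j (by simpa using hj)
    have h2 : ∑ j ∈ ({j | D j = D i} : Set (Fin n)).toFinset, ∑ k, (C j k - D j k) ^ 2 ≤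
        ∑ j, ∑ k, (C j k - D j k) ^ 2 :=
      Finset.sum_le_sum_of_subset_of_nonneg (Finset.subset_univ _)
        fun j _ _ => Finset.sum_nonneg fun k _ => sq_nonneg _
    have h3 : (m : ℝ) * (s / 3) ^ 2 ≤
        (({j | D j = D i} : Set (Fin n)).toFinset.card : ℝ) * (s / 3) ^ 2 := by
      gcongr
    rw [nsmul_eq_mul] at h1
    linarith
  choose f hf1 hf2 using key
  have hle : (Set.range fun i => D i).ncard ≤ (Set.range fun i => C i).ncard := by
    have hex : ∀ v ∈ (Set.range fun i => D i), ∃ i, D i = v := fun v hv => hv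
    choose g hg using hex
    refine Set.ncard_le_ncard_of_injOn
      (fun v => by classical exact if h : v ∈ (Set.range fun i => D i) then C (f (g v h)) else v)
      ?_ ?_ (Set.finite_range _)
    · intro v hv
      simp only [dif_pos hv]
      exact ⟨_, rfl⟩
    · intro v hv w hw hvw
      simp only [dif_pos hv, dif_pos hw] at hvw
      have a1 := hf2 (g v hv)
      have a2 := hf2 (g w hw)
      rw [hf1, hg] at a1 a2
      rw [hvw] at a1
      by_contra hne
      have hd := hsep (g v hv) (g w hw) (by rw [hg, hg]; exact hne)
      rw [hg, hg] at hd
      unfold rowDist at hd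
      rw [Real.le_sqrt' hs] at hd
      have h : ∑ k, (v k - w k) ^ 2 ≤ ∑ k, (2 * (C (f (g w hw)) k - v k) ^ 2
          + 2 * (C (f (g w hw)) k - w k) ^ 2) := by
        refine Finset.sum_le_sum fun k _ => ?_
        nlinarith [sq_nonneg ((C (f (g w hw)) k - v k) + (C (f (g w hw)) k - w k))]
      simp only [Finset.sum_add_distrib, ← Finset.mul_sum] at h
      nlinarith [sq_pos_of_pos hs]
  omega
end

section
/- Let n, R, K be positive integers, let r > 0, and let m be a positive integer. Let D ∈ ℝ^{n×R} have exactly K distinct row values, with any two distinct row values of D at Euclidean distance at least 3r, and with each distinct row value of D occurring as a row of D for more than m indices. Let C ∈ ℝ^{n×R} have at most K distinct row values, and suppose |{i : ‖C_{i,·} − D_{i,·}‖₂ ≥ r}| ≤ m. Then there exists a map π from the set of distinct row values of D to the set of distinct row values of C which is injective and satisfies: for every index i with ‖C_{i,·} − D_{i,·}‖₂ < r, C_{i,·} = π(D_{i,·}). In particular, |{i : C_{i,·} ≠ π(D_{i,·})}| ≤ |{i : ‖C_{i,·} − D_{i,·}‖₂ ≥ r}|. -/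
open Matrix

theorem rowDist_comm' {R : ℕ} (a b : Fin R → ℝ) : rowDist a b = rowDist b a := by
  simp only [rowDist_eq_dist, dist_comm]

theorem rowDist_triangle {R : ℕ} (a b c : Fin R → ℝ) :
    rowDist a c ≤ rowDist a b + rowDist b c := by
  simp only [rowDist_eq_dist]
  exact dist_triangle _ _ _

/-- the deterministic clustering/pigeonhole core of the proof of Theorem 2.1:
there is an injective matching `π` from the row values of `D` to the row values of `C` with
`C_{i,·} = π(D_{i,·})` whenever `‖C_{i,·} - D_{i,·}‖₂ < r`; in particular the number of
misassigned indices is bounded by the number of rows where `C` and `D` differ by at least `r`. -/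
theorem stmt14 {n R K m : ℕ} (hm : 0 < m) (r : ℝ) (hr : 0 < r)
    (D C : Matrix (Fin n) (Fin R) ℝ)
    (hKrows : (Set.range fun i => D i).ncard = K)
    (hsep : ∀ i j, D i ≠ D j → 3 * r ≤ rowDist (D i) (D j))
    (hocc : ∀ i, m < {j | D j = D i}.ncard)
    (hCK : (Set.range fun i => C i).ncard ≤ K)
    (hbad : {i | r ≤ rowDist (C i) (D i)}.ncard ≤ m) :
    ∃ π : (Fin R → ℝ) → (Fin R → ℝ),
      Set.InjOn π (Set.range fun i => D i) ∧
      Set.MapsTo π (Set.range fun i => D i) (Set.range fun i => C i) ∧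
      (∀ i, rowDist (C i) (D i) < r → C i = π (D i)) ∧
      {i | C i ≠ π (D i)}.ncard ≤ {i | r ≤ rowDist (C i) (D i)}.ncard := by
  have hgood : ∀ i, ∃ j, D j = D i ∧ rowDist (C j) (D j) < r := by
    intro i
    by_contra! h
    have h1 : {j | D j = D i}.ncard ≤ {i | r ≤ rowDist (C i) (D i)}.ncard :=
      Set.ncard_le_ncard (fun j hj => h j hj) (Set.toFinite _)
    have := hocc i
    omega
  have hex : ∀ v : Fin R → ℝ, ∃ w : Fin R → ℝ, v ∈ (Set.range fun i => D i) →
      w ∈ (Set.range fun i => C i) ∧ rowDist w v < r := by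
    intro v
    by_cases hv : v ∈ (Set.range fun i => D i)
    · obtain ⟨i, rfl⟩ := hv
      obtain ⟨j, hj, hjr⟩ := hgood i
      exact ⟨C j, fun _ => ⟨⟨j, rfl⟩, by rw [hj] at hjr; exact hjr⟩⟩
    · exact ⟨v, fun h => absurd h hv⟩
  choose π hπ using hex
  have key : ∀ i j, ∀ w, rowDist w (D i) < r → rowDist w (D j) < r → D i = D j := by
    intro i j w h1 h2
    by_contra hne
    have h3 := hsep i j hne
    have h4 := rowDist_triangle (D i) w (D j)
    rw [rowDist_comm' (D i) w] at h4
    linarith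
  have hinj : Set.InjOn π (Set.range fun i => D i) := by
    rintro _ ⟨i, rfl⟩ _ ⟨j, rfl⟩ h
    have h1 := (hπ (D i) ⟨i, rfl⟩).2
    have h2 := (hπ (D j) ⟨j, rfl⟩).2
    simp only at h
    rw [h] at h1
    exact key i j _ h1 h2
  have hmaps : Set.MapsTo π (Set.range fun i => D i) (Set.range fun i => C i) :=
    fun v hv => (hπ v hv).1
  have himg : π '' (Set.range fun i => D i) = (Set.range fun i => C i) := by
    apply Set.eq_of_subset_of_ncard_le hmaps.image_subset _ (Set.finite_range _)
    rw [Set.ncard_image_of_injOn hinj, hKrows]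
    exact hCK
  have hmain : ∀ i, rowDist (C i) (D i) < r → C i = π (D i) := by
    intro i hi
    have hmem : C i ∈ π '' (Set.range fun i => D i) := by
      rw [himg]
      exact ⟨i, rfl⟩
    obtain ⟨_, ⟨j, rfl⟩, hj⟩ := hmem
    have h2 := (hπ (D j) ⟨j, rfl⟩).2
    simp only at hj
    rw [hj] at h2
    rw [key i j _ hi h2, hj]
  refine ⟨π, hinj, hmaps, hmain, Set.ncard_le_ncard (fun i hi => ?_) (Set.toFinite _)⟩
  by_contra h
  exact hi (hmain i (not_le.mp h))
end

section
/- Let n, R, K be positive integers and let ζ > 0. Let C ∈ ℝ^{n×R} have more than K distinct row values, with any two distinct row values of C at Euclidean distance at least ζ, and let D ∈ ℝ^{n×R} have at most K distinct row values. Then some distinct row value of C is at Euclidean distance greater than ζ/3 from every row of D. Consequently, if in addition each distinct row value of C occurs as a row of C for more than m indices, for some positive integer m, then ‖C − D‖_F > √m·(ζ/3). -/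
open Matrix

/-- if `C` has more than `K` distinct row values, pairwise `ζ`-separated, and `D`
has at most `K` distinct row values, then some row value of `C` is farther than `ζ/3` from every
row of `D`; consequently, if moreover each row value of `C` occurs more than `m` times, then
`‖C - D‖_F > √m (ζ/3)`. -/
theorem stmt15 {n R K : ℕ} (ζ : ℝ) (hζ : 0 < ζ)
    (C D : Matrix (Fin n) (Fin R) ℝ)
    (hCK : K < (Set.range fun i => C i).ncard)
    (hsep : ∀ i j, C i ≠ C j → ζ ≤ rowDist (C i) (C j))
    (hDK : (Set.range fun i => D i).ncard ≤ K) :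
    (∃ i, ∀ j, ζ / 3 < rowDist (C i) (D j)) ∧
      ∀ m : ℕ, 0 < m → (∀ i, m < {j | C j = C i}.ncard) →
        Real.sqrt m * (ζ / 3) < frobNorm (C - D) := by
  have h1 : ∃ i, ∀ j, ζ / 3 < rowDist (C i) (D j) := by
    by_contra! hcon
    have hex : ∀ c : Fin R → ℝ, ∃ d : Fin R → ℝ, c ∈ (Set.range fun i => C i) →
        d ∈ (Set.range fun i => D i) ∧ rowDist c d ≤ ζ / 3 := by
      intro c
      by_cases hc : c ∈ (Set.range fun i => C i)
      · obtain ⟨i, rfl⟩ := hc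
        obtain ⟨j, hj⟩ := hcon i
        exact ⟨D j, fun _ => ⟨⟨j, rfl⟩, hj⟩⟩
      · exact ⟨c, fun h => absurd h hc⟩
    choose f hf using hex
    obtain ⟨a, ha, b, hb, hab, hfab⟩ := Set.exists_ne_map_eq_of_ncard_lt_of_maps_to
      (lt_of_le_of_lt hDK hCK) (fun c hc => (hf c hc).1) (Set.finite_range _)
    have h2 := (hf a ha).2
    have h3 := (hf b hb).2
    obtain ⟨i, rfl⟩ := ha
    obtain ⟨j, rfl⟩ := hb
    have h4 := hsep i j hab
    simp only at h2 h3 hfab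
    rw [← hfab] at h3
    rw [rowDist_eq_dist] at h2 h3 h4
    have h5 := dist_triangle_right (WithLp.toLp 2 (C i)) (WithLp.toLp 2 (C j))
      (WithLp.toLp 2 (f (C i)))
    linarith
  refine ⟨h1, ?_⟩
  intro m _ hm
  obtain ⟨i, hi⟩ := h1
  have hmi := hm i
  classical
  have hS : {j | C j = C i} = ((Finset.univ.filter fun j => C j = C i : Finset (Fin n)) :
      Set (Fin n)) := by ext; simp
  rw [hS, Set.ncard_coe_finset] at hmi
  have hz : 0 < ζ / 3 := by positivity
  rw [frobNorm]
  apply Real.lt_sqrt_of_sq_lt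
  rw [mul_pow, Real.sq_sqrt (Nat.cast_nonneg m)]
  calc (m : ℝ) * (ζ / 3) ^ 2
      < ((Finset.univ.filter fun j => C j = C i).card : ℝ) * (ζ / 3) ^ 2 := by
        have : (m : ℝ) < ((Finset.univ.filter fun j => C j = C i).card : ℝ) := by
          exact_mod_cast hmi
        gcongr
    _ = ∑ j ∈ Finset.univ.filter (fun j => C j = C i), (ζ / 3) ^ 2 := by simp
    _ ≤ ∑ j ∈ Finset.univ.filter (fun j => C j = C i), ∑ k, ((C - D) j k) ^ 2 := by
        apply Finset.sum_le_sum
        intro j hj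
        have hj' : C j = C i := by simpa using hj
        have h := hi j
        rw [← hj', rowDist, Real.lt_sqrt hz.le] at h
        simpa using h.le
    _ ≤ ∑ j, ∑ k, ((C - D) j k) ^ 2 := by
        apply Finset.sum_le_sum_of_subset_of_nonneg (Finset.filter_subset _ _)
        intros
        positivity
end
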